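/- Let (A,ω,τ,K) be an ergodic C*-dynamical system which is asymptotically abelian with respect to a Følner net (Λ_{1α}) in K, with ω tracial, and let (Λ_{2α}) be a Følner net in K over the same directed set. If (g,h) ↦ ω(τ_h(a₁) τ_g(a₂) τ_{gh}(a₃) τ_g(a₄) τ_h(a₅)) is (Σ|_K × Σ|_K)-measurable for all a₁,...,a₅ ∈ A, then lim_α M_{α,e,e}( ω(τ_h(a₁) τ_g(a₂) τ_{gh}(a₃) τ_g(a₄) τ_h(a₅)) ) = ω(a₅a₁) ω(a₃) ω(a₂a₄) for all a₁, a₂, a₃, a₄, a₅ ∈ A. -/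

import Mathlib

open Filter Topology
open scoped Pointwise ComplexOrder

/-- A Følner net in a (sub)semigroup `K` of a measure group `(G, Σ, μ)`. -/
structure FolnerNetIn {G : Type*} [Group G] [MeasurableSpace G]
    (μ : MeasureTheory.Measure G) (K : Set G) where
  idx : Type
  [pre : Preorder idx]
  [ne : Nonempty idx]
  [dir : IsDirected idx (· ≤ ·)]
  Lam : idx → Set G
  meas : ∀ α, MeasurableSet (Lam α) ∧ Lam α ⊆ K
  fin : ∀ᶠ α in atTop, 0 < μ (Lam α) ∧ μ (Lam α) < ⊤
  folner : ∀ g ∈ K, Tendsto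
    (fun α => (μ (symmDiff (Lam α) (Lam α * {g}))).toReal / (μ (Lam α)).toReal)
    atTop (𝓝 0)

attribute [instance] FolnerNetIn.pre FolnerNetIn.ne FolnerNetIn.dir

open MeasureTheory

/-- Ergodicity of `(A, ω, τ, K)` along a Følner net in `K`. -/
def FolnerNetIn.ErgodicAlong
    {A : Type*} [NormedRing A] [StarRing A] [CStarRing A] [NormedAlgebra ℂ A]
    [CompleteSpace A] [StarModule ℂ A]
    {G : Type*} [CommGroup G] [MeasurableSpace G] {μ : Measure G} {K : Set G}
    (F : FolnerNetIn μ K) (ω : A →ₗ[ℂ] ℂ) (τ : G → A ≃⋆ₐ[ℂ] A) : Prop :=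
  ∀ a b : A,
    Tendsto (fun α => (μ (F.Lam α)).toReal⁻¹ • ∫ g in F.Lam α, ω (a * τ g b) ∂μ)
      atTop (𝓝 (ω a * ω b))

/-!
Write `F(g, h)` for the correlation function. Since `ω` is `τ`-invariant and `G` is abelian,
`F(g k, h k)` is `F(g, h)` with `a₃` replaced by `τ_k(a₃)`; hence, by the Følner property, the
averages of `F` depend on `a₃` in an asymptotically `τ`-invariant way. Traciality bounds them by a
multiple of `‖a₃‖₂ = ω(a₃* a₃)^{1/2}`. By ergodicity the `τ`-orbit of `a₃ - ω(a₃)` accumulates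
weakly at `0` in the GNS space, so convex combinations of it are `‖·‖₂`-small and `a₃` may be
replaced by `ω(a₃)`. What remains is the average of `ω(τ_h(a₅ a₁) τ_g(a₂ a₄))`, to which the same
argument applies with `h` alone shifted.
-/

section WeakClosure

open scoped RealInnerProductSpace

variable {E : Type*} [SeminormedAddCommGroup E] [InnerProductSpace ℝ E]

theorem norm_smul_add_smul_sq_le_of_inner_le {x y : E} {t D B η : ℝ} (ht₀ : 0 ≤ t)
    (ht₁ : t ≤ 1) (hη : 0 ≤ η) (hx : ‖x‖ ^ 2 ≤ D + η) (hy : ‖y‖ ≤ B) (hxy : ⟪x, y⟫ ≤ η) :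
    ‖(1 - t) • x + t • y‖ ^ 2 ≤ (1 - t) ^ 2 * D + t ^ 2 * B ^ 2 + η := by
  have hs : 0 ≤ 1 - t := sub_nonneg.2 ht₁
  calc ‖(1 - t) • x + t • y‖ ^ 2
      = (1 - t) ^ 2 * ‖x‖ ^ 2 + 2 * ((1 - t) * t) * ⟪x, y⟫ + t ^ 2 * ‖y‖ ^ 2 := by
        rw [norm_add_sq_real, norm_smul, norm_smul, real_inner_smul_left, real_inner_smul_right,
          mul_pow, mul_pow, Real.norm_of_nonneg hs, Real.norm_of_nonneg ht₀]
        ring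
    _ ≤ (1 - t) ^ 2 * (D + η) + 2 * ((1 - t) * t) * η + t ^ 2 * B ^ 2 := by gcongr
    _ = (1 - t) ^ 2 * D + t ^ 2 * B ^ 2 + (1 - t ^ 2) * η := by ring
    _ ≤ (1 - t) ^ 2 * D + t ^ 2 * B ^ 2 + η := by
        gcongr
        exact mul_le_of_le_one_left hη (sub_le_self _ (sq_nonneg t))

-- Moving from a nearly minimal `x ∈ s` towards a nearly orthogonal `y ∈ s` decreases the norm.
theorem zero_mem_closure_of_forall_exists_inner_lt {s : Set E} (hs : Convex ℝ s)
    (hbdd : Bornology.IsBounded s) (h : ∀ x, ∀ ε > 0, ∃ y ∈ s, ⟪x, y⟫ < ε) :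
    (0 : E) ∈ closure s := by
  obtain ⟨B, hB⟩ := hbdd.exists_norm_le
  have hne : s.Nonempty := let ⟨y, hy, _⟩ := h 0 1 one_pos; ⟨y, hy⟩
  rw [Metric.mem_closure_iff_infDist_zero hne]
  by_contra h0
  set D := Metric.infDist 0 s ^ 2
  have hD : 0 < D := pow_pos (Metric.infDist_nonneg.lt_of_ne' h0) 2
  have hD_le : ∀ z ∈ s, D ≤ ‖z‖ ^ 2 := fun z hz =>
    pow_le_pow_left₀ Metric.infDist_nonneg
      (by simpa using Metric.infDist_le_dist_of_mem (x := 0) hz) 2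
  set t := D / (D + B ^ 2)
  have ht₀ : 0 ≤ t := by positivity
  have ht₁ : t ≤ 1 := div_le_one_of_le₀ (by linarith [sq_nonneg B]) (by positivity)
  have hD_le_min : D ≤ (1 - t) ^ 2 * D + t ^ 2 * B ^ 2 := le_of_forall_pos_le_add fun η hη => by
    obtain ⟨x, hx, hxD⟩ : ∃ x ∈ s, dist 0 x < √(D + η) :=
      (Metric.infDist_lt_iff hne).1 (Real.lt_sqrt_of_sq_lt (by linarith))
    obtain ⟨y, hy, hxy⟩ := h x η hη
    refine (hD_le _ (hs hx hy (sub_nonneg.2 ht₁) ht₀ (sub_add_cancel 1 t))).trans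
      (norm_smul_add_smul_sq_le_of_inner_le ht₀ ht₁ hη.le ?_ (hB y hy) hxy.le)
    rw [dist_zero_left, Real.lt_sqrt (norm_nonneg x)] at hxD
    exact hxD.le
  have hmin : (1 - t) ^ 2 * D + t ^ 2 * B ^ 2 = D - D * t := by
    simp only [t]; field_simp; ring
  have : 0 < D * t := by positivity
  linarith

theorem tendsto_zero_of_forall_tendsto_sub_zero {F ι : Type*} [SeminormedAddCommGroup F]
    [NormedSpace ℝ F] {l : Filter ι} {s : Set E} (hbdd : Bornology.IsBounded s)
    (h : ∀ x, ∀ ε > 0, ∃ y ∈ s, ⟪x, y⟫ < ε) {Φ : ι → E →ₗ[ℝ] F} {C : ℝ}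
    (hC : ∀ i x, ‖Φ i x‖ ≤ C * ‖x‖) {v : E}
    (hv : ∀ y ∈ s, Tendsto (fun i => Φ i y - Φ i v) l (𝓝 0)) :
    Tendsto (fun i => Φ i v) l (𝓝 0) := by
  have hconv : Convex ℝ {x | Tendsto (fun i => Φ i x - Φ i v) l (𝓝 0)} := by
    intro x hx y hy a b _ _ hab
    have hcomb : ∀ i, Φ i (a • x + b • y) - Φ i v =
        a • (Φ i x - Φ i v) + b • (Φ i y - Φ i v) := fun i => by
      rw [map_add, map_smul, map_smul, smul_sub, smul_sub, sub_add_sub_comm, ← add_smul, hab,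
        one_smul]
    simpa only [Set.mem_ofPred_eq, hcomb, smul_zero, add_zero] using
      (hx.const_smul a).add (hy.const_smul b)
  have hmem : (0 : E) ∈ closure (convexHull ℝ s) :=
    zero_mem_closure_of_forall_exists_inner_lt (convex_convexHull ℝ s)
      (isBounded_convexHull.2 hbdd)
      fun x ε hε => (h x ε hε).imp fun y hy => ⟨subset_convexHull ℝ s hy.1, hy.2⟩
  rw [Metric.tendsto_nhds]
  intro ε hε
  obtain ⟨x, hx, hxε⟩ := Metric.mem_closure_iff.1 hmem (ε / (2 * (|C| + 1))) (by positivity)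
  have hΦx : ∀ i, ‖Φ i x‖ ≤ ε / 2 := fun i => by
    rw [dist_zero_left] at hxε
    calc ‖Φ i x‖ ≤ C * ‖x‖ := hC i x
      _ ≤ (|C| + 1) * (ε / (2 * (|C| + 1))) := by
        gcongr
        linarith [le_abs_self C]
      _ = ε / 2 := by field_simp
  filter_upwards [Metric.tendsto_nhds.1 (convexHull_min hv hconv hx) (ε / 2) (half_pos hε)]
    with i hi
  rw [dist_zero_right] at hi ⊢
  linarith [norm_le_norm_add_norm_sub (Φ i x) (Φ i v), hΦx i]

end WeakClosure

section Folner

open scoped symmDiff ProbabilityTheory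

theorem integral_cond {Ω E : Type*} [MeasurableSpace Ω] [NormedAddCommGroup E] [NormedSpace ℝ E]
    (μ : Measure Ω) (s : Set Ω) (f : Ω → E) :
    ∫ x, f x ∂μ[|s] = (μ s).toReal⁻¹ • ∫ x in s, f x ∂μ := by
  rw [ProbabilityTheory.cond, integral_smul_measure, ENNReal.toReal_inv]

theorem norm_setIntegral_sub_setIntegral_le {Ω E : Type*} [MeasurableSpace Ω]
    [NormedAddCommGroup E] [NormedSpace ℝ E] {μ : Measure Ω} {s t : Set Ω} {f : Ω → E} {C : ℝ}
    (hs : MeasurableSet s) (ht : MeasurableSet t) (hs' : μ s ≠ ⊤) (ht' : μ t ≠ ⊤)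
    (hfs : IntegrableOn f s μ) (hft : IntegrableOn f t μ) (hC : ∀ x, ‖f x‖ ≤ C) :
    ‖∫ x in s, f x ∂μ - ∫ x in t, f x ∂μ‖ ≤ C * μ.real (s ∆ t) := by
  have hst : μ (s \ t) < ⊤ := measure_lt_top_mono Set.sdiff_subset hs'.lt_top
  have hts : μ (t \ s) < ⊤ := measure_lt_top_mono Set.sdiff_subset ht'.lt_top
  have hdiff : ∫ x in s, f x ∂μ - ∫ x in t, f x ∂μ =
      ∫ x in s \ t, f x ∂μ - ∫ x in t \ s, f x ∂μ := by
    rw [← integral_inter_add_sdiff ht hfs, ← integral_inter_add_sdiff hs hft, Set.inter_comm t s,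
      add_sub_add_left_eq_sub]
  calc ‖∫ x in s, f x ∂μ - ∫ x in t, f x ∂μ‖
      ≤ ‖∫ x in s \ t, f x ∂μ‖ + ‖∫ x in t \ s, f x ∂μ‖ := hdiff ▸ norm_sub_le _ _
    _ ≤ C * μ.real (s \ t) + C * μ.real (t \ s) :=
        add_le_add (norm_setIntegral_le_of_norm_le_const hst fun x _ => hC x)
          (norm_setIntegral_le_of_norm_le_const hts fun x _ => hC x)
    _ = C * μ.real (s ∆ t) := by
        rw [← mul_add, Set.symmDiff_def,
          measureReal_union disjoint_sdiff_sdiff (ht.diff hs) hst.ne hts.ne]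

theorem aestronglyMeasurable_of_measurable_subtype {Ω : Type*} [MeasurableSpace Ω]
    {ν : Measure Ω} {K : Set Ω} {f : Ω → ℂ} (hK : MeasurableSet K) (hν : ∀ᵐ x ∂ν, x ∈ K)
    (hf : Measurable fun x : K => f x) : AEStronglyMeasurable f ν := by
  rw [← Measure.restrict_eq_self_of_ae_mem hν]
  exact (aemeasurable_restrict_of_measurable_subtype hK hf).aestronglyMeasurable

theorem aestronglyMeasurable_prod_of_measurable_subtype {Ω : Type*} [MeasurableSpace Ω]
    {ν₁ ν₂ : Measure Ω} {K : Set Ω} {F : Ω × Ω → ℂ}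
    (hK : MeasurableSet K) (hν₁ : ∀ᵐ x ∂ν₁, x ∈ K) (hν₂ : ∀ᵐ y ∂ν₂, y ∈ K)
    (hF : Measurable fun p : K × K => F (p.1, p.2)) :
    AEStronglyMeasurable F (ν₁.prod ν₂) := by
  refine aestronglyMeasurable_of_measurable_subtype (hK.prod hK) ?_
    (hF.comp (MeasurableEquiv.Set.prod K K).measurable)
  filter_upwards [Measure.quasiMeasurePreserving_fst.ae hν₁,
    Measure.quasiMeasurePreserving_snd.ae hν₂] with p hp₁ hp₂
  exact ⟨hp₁, hp₂⟩

theorem measurableMul_of_measurableSet_mul_singleton {G : Type*} [CommGroup G]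
    [MeasurableSpace G] (h : ∀ (V : Set G) (g : G), MeasurableSet V → MeasurableSet (V * {g})) :
    MeasurableMul G := by
  have hmul : ∀ g : G, Measurable fun x => x * g := fun g V hV => by
    have hV' := h V g⁻¹ hV
    rwa [Set.mul_singleton, Set.image_mul_right, inv_inv] at hV'
  exact { measurable_mul_const := hmul
          measurable_const_mul := fun g => by simpa only [mul_comm g] using hmul g }

theorem isMulRightInvariant_of_measure_mul_singleton {G : Type*} [Group G] [MeasurableSpace G]
    [MeasurableMul G] {μ : Measure G}
    (h : ∀ (V : Set G) (g : G), MeasurableSet V → μ (V * {g}) = μ V) : μ.IsMulRightInvariant where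
  map_mul_right_eq_self g := by
    ext V hV
    rw [Measure.map_apply (measurable_mul_const g) hV, ← h V g⁻¹ hV, Set.mul_singleton,
      Set.image_mul_right, inv_inv]

variable {G : Type*} [Group G] [MeasurableSpace G]

/-- A Følner net `Λ : ι → Set G` in `K ⊆ G` along a filter `l`. Unlike `FolnerNetIn` it leaves the
index type and the filter free, so that two nets over the same directed set can be compared. -/
structure IsFolnerNet (μ : Measure G) (K : Set G) {ι : Type*} (l : Filter ι) (Λ : ι → Set G) :
    Prop where
  measurableSet : ∀ i, MeasurableSet (Λ i)
  subset : ∀ i, Λ i ⊆ K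
  eventually_pos_lt_top : ∀ᶠ i in l, 0 < μ (Λ i) ∧ μ (Λ i) < ⊤
  tendsto_symmDiff : ∀ k ∈ K,
    Tendsto (fun i => μ.real (Λ i ∆ (Λ i * {k})) / μ.real (Λ i)) l (𝓝 0)

theorem FolnerNetIn.isFolnerNet {μ : Measure G} {K : Set G} (F : FolnerNetIn μ K) :
    IsFolnerNet μ K atTop F.Lam :=
  ⟨fun i => (F.meas i).1, fun i => (F.meas i).2, F.fin, F.folner⟩

theorem IsFolnerNet.ae_mem {μ : Measure G} {K : Set G} {ι : Type*} {l : Filter ι}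
    {Λ : ι → Set G} (hΛ : IsFolnerNet μ K l Λ) (i : ι) : ∀ᵐ g ∂μ[|Λ i], g ∈ K :=
  ProbabilityTheory.ae_cond_of_forall_mem (hΛ.measurableSet i) fun _ hg => hΛ.subset i hg

theorem IsFolnerNet.integrable_prod {μ : Measure G} {K : Set G} {ι : Type*} {l : Filter ι}
    {Λ : ι → Set G} {ν : ι → Measure G} [∀ i, IsZeroOrProbabilityMeasure (ν i)] {F : G × G → ℂ}
    {C : ℝ} (hΛ : IsFolnerNet μ K l Λ) (hK : MeasurableSet K)
    (hν : ∀ i, ∀ᵐ h ∂ν i, h ∈ K) (hF : Measurable fun p : K × K => F (p.1, p.2))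
    (hC : ∀ p, ‖F p‖ ≤ C) (i : ι) : Integrable F ((μ[|Λ i]).prod (ν i)) :=
  .of_bound (aestronglyMeasurable_prod_of_measurable_subtype hK (hΛ.ae_mem i) (hν i) hF) C
    (ae_of_all _ hC)

theorem IsFolnerNet.exists_re_lt_of_tendsto {μ : Measure G} {K : Set G} {ι : Type*} {l : Filter ι}
    [l.NeBot] {Λ : ι → Set G}
    (hΛ : IsFolnerNet μ K l Λ) (hK : MeasurableSet K) {φ : G → ℂ} {c : ℂ} {C r : ℝ}
    (hφ : Measurable fun g : K => φ g) (hC : ∀ g, ‖φ g‖ ≤ C)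
    (hlim : Tendsto (fun i => ∫ g, φ g ∂μ[|Λ i]) l (𝓝 c)) (hr : c.re < r) :
    ∃ k ∈ K, (φ k).re < r := by
  obtain ⟨i, hi, hir⟩ := (hΛ.eventually_pos_lt_top.and
    (((Complex.continuous_re.tendsto c).comp hlim).eventually_lt_const hr)).exists
  have := ProbabilityTheory.cond_isProbabilityMeasure_of_finite hi.1.ne' hi.2.ne
  have hint : Integrable φ μ[|Λ i] :=
    .of_bound (aestronglyMeasurable_of_measurable_subtype hK (hΛ.ae_mem i) hφ) C (ae_of_all _ hC)
  obtain ⟨k, hk, hkle⟩ := exists_notMem_null_le_integral hint.re (hΛ.ae_mem i)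
  exact ⟨k, not_not.1 hk, hkle.trans_lt ((integral_re hint).trans_lt hir)⟩

variable [MeasurableMul G] {μ : Measure G} [μ.IsMulRightInvariant] {K Λ : Set G}

theorem measurableSet_mul_singleton (hΛ : MeasurableSet Λ) (k : G) : MeasurableSet (Λ * {k}) := by
  rw [Set.mul_singleton, Set.image_mul_right]
  exact measurable_mul_const _ hΛ

theorem measure_mul_singleton (μ : Measure G) [μ.IsMulRightInvariant] (Λ : Set G) (k : G) :
    μ (Λ * {k}) = μ Λ := by
  rw [Set.mul_singleton, Set.image_mul_right, measure_preimage_mul_right]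

theorem norm_integral_cond_mul_right_sub_le (hK : MeasurableSet K) (hΛ : MeasurableSet Λ)
    (hΛK : Λ ⊆ K) (hμΛ : μ Λ ≠ ⊤) {k : G} (hΛkK : Λ * {k} ⊆ K) {f : G → ℂ}
    (hf : Measurable fun g : K => f g) {C : ℝ} (hC : ∀ g, ‖f g‖ ≤ C) :
    ‖∫ g, f (g * k) ∂μ[|Λ] - ∫ g, f g ∂μ[|Λ]‖ ≤
      C * (μ.real (Λ ∆ (Λ * {k})) / μ.real Λ) := by
  have hΛk : MeasurableSet (Λ * {k}) := measurableSet_mul_singleton hΛ k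
  have hμΛk : μ (Λ * {k}) ≠ ⊤ := (measure_mul_singleton μ Λ k).trans_ne hμΛ
  have hint : ∀ {s : Set G}, MeasurableSet s → s ⊆ K → μ s ≠ ⊤ → IntegrableOn f s μ :=
    fun hs hsK hμs => .of_bound hμs.lt_top (aestronglyMeasurable_of_measurable_subtype hK
      ((ae_restrict_mem hs).mono fun _ hg => hsK hg) hf) C (ae_of_all _ hC)
  have hshift : ∫ g in Λ, f (g * k) ∂μ = ∫ g in Λ * {k}, f g ∂μ := by
    rw [← (measurePreserving_mul_right μ k).setIntegral_preimage_emb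
      (measurableEmbedding_mulRight k) f, Set.mul_singleton,
      Set.preimage_image_eq _ (mul_left_injective k)]
  rw [integral_cond, integral_cond, hshift, ← smul_sub, norm_smul, norm_inv,
    Real.norm_of_nonneg ENNReal.toReal_nonneg, norm_sub_rev, ← mul_div_assoc, div_eq_inv_mul]
  exact mul_le_mul_of_nonneg_left (norm_setIntegral_sub_setIntegral_le hΛ hΛk hμΛ hμΛk
    (hint hΛ hΛK hμΛ) (hint hΛk hΛkK hμΛk) hC) (inv_nonneg.2 ENNReal.toReal_nonneg)

end Folner

section ProductAverages

open scoped symmDiff ProbabilityTheory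

theorem integral_cond_prod_cond {Ω E : Type*} [MeasurableSpace Ω] [NormedAddCommGroup E]
    [NormedSpace ℝ E] {μ : Measure Ω} {s t : Set Ω} {F : Ω × Ω → E}
    (hF : Integrable F ((μ[|t]).prod (μ[|s]))) :
    ∫ p, F p ∂(μ[|t]).prod (μ[|s]) =
      ((μ s).toReal * (μ t).toReal)⁻¹ • ∫ h in s, ∫ g in t, F (g, h) ∂μ ∂μ := by
  rw [integral_prod_symm F hF]
  simp only [integral_cond, integral_smul]
  rw [smul_smul, mul_inv_rev]

instance isZeroOrProbabilityMeasure_prod {Ω Ω' : Type*} [MeasurableSpace Ω] [MeasurableSpace Ω']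
    (μ : Measure Ω) (ν : Measure Ω') [IsZeroOrProbabilityMeasure μ]
    [IsZeroOrProbabilityMeasure ν] : IsZeroOrProbabilityMeasure (μ.prod ν) := by
  rw [← Measure.compProd_const]
  infer_instance

variable {G : Type*} [Group G] [MeasurableSpace G] [MeasurableMul G] {μ : Measure G}
  [μ.IsMulRightInvariant] {K : Set G} {ι : Type*} {l : Filter ι} {Λ : ι → Set G}
  {ν : ι → Measure G} [∀ i, IsZeroOrProbabilityMeasure (ν i)] {F : G × G → ℂ} {C : ℝ} {k : G}

theorem measurable_mul_const_subtype (hKmul : ∀ g ∈ K, ∀ h ∈ K, g * h ∈ K) (hk : k ∈ K) :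
    Measurable fun g : K => (⟨g * k, hKmul g g.2 k hk⟩ : K) :=
  ((measurable_mul_const k).comp measurable_subtype_coe).subtype_mk

theorem IsFolnerNet.tendsto_integral_prod_mul_fst_sub (hΛ : IsFolnerNet μ K l Λ)
    (hK : MeasurableSet K) (hKmul : ∀ g ∈ K, ∀ h ∈ K, g * h ∈ K)
    (hν : ∀ i, ∀ᵐ h ∂ν i, h ∈ K) (hF : Measurable fun p : K × K => F (p.1, p.2))
    (hC : ∀ p, ‖F p‖ ≤ C) (hk : k ∈ K) :
    Tendsto (fun i => ∫ p, F (p.1 * k, p.2) ∂(μ[|Λ i]).prod (ν i) -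
      ∫ p, F p ∂(μ[|Λ i]).prod (ν i)) l (𝓝 0) := by
  have hFk : Measurable fun p : K × K => F (p.1 * k, p.2) :=
    hF.comp (((measurable_mul_const_subtype hKmul hk).comp measurable_fst).prodMk measurable_snd)
  have hbound : ∀ᶠ i in l, ‖∫ p, F (p.1 * k, p.2) ∂(μ[|Λ i]).prod (ν i) -
      ∫ p, F p ∂(μ[|Λ i]).prod (ν i)‖ ≤
        C * (μ.real (Λ i ∆ (Λ i * {k})) / μ.real (Λ i)) := by
    filter_upwards [hΛ.eventually_pos_lt_top] with i hi
    have hint := hΛ.integrable_prod hK hν hF hC i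
    have hintk := hΛ.integrable_prod (F := fun p => F (p.1 * k, p.2)) hK hν hFk (fun p => hC _) i
    have hΛkK : Λ i * {k} ⊆ K := by
      rintro _ ⟨g, hg, _, rfl, rfl⟩
      exact hKmul g (hΛ.subset i hg) _ hk
    have hC₀ : 0 ≤ C := (norm_nonneg _).trans (hC (k, k))
    rw [integral_prod_symm _ hintk, integral_prod_symm _ hint,
      ← integral_sub hintk.integral_prod_right hint.integral_prod_right]
    refine (norm_integral_le_of_norm_le_const ?_).trans
      (mul_le_of_le_one_right (by positivity) measureReal_le_one)
    filter_upwards [hν i] with h hh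
    exact norm_integral_cond_mul_right_sub_le (f := fun g => F (g, h)) hK (hΛ.measurableSet i)
      (hΛ.subset i) hi.2.ne hΛkK
      (hF.comp (measurable_id.prodMk (measurable_const (a := (⟨h, hh⟩ : K))))) fun _ => hC _
  exact squeeze_zero_norm' hbound (by simpa using (hΛ.tendsto_symmDiff k hk).const_mul C)

theorem IsFolnerNet.tendsto_integral_prod_mul_snd_sub (hΛ : IsFolnerNet μ K l Λ)
    (hK : MeasurableSet K) (hKmul : ∀ g ∈ K, ∀ h ∈ K, g * h ∈ K)
    (hν : ∀ i, ∀ᵐ g ∂ν i, g ∈ K) (hF : Measurable fun p : K × K => F (p.1, p.2))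
    (hC : ∀ p, ‖F p‖ ≤ C) (hk : k ∈ K) :
    Tendsto (fun i => ∫ p, F (p.1, p.2 * k) ∂(ν i).prod (μ[|Λ i]) -
      ∫ p, F p ∂(ν i).prod (μ[|Λ i])) l (𝓝 0) := by
  have h := hΛ.tendsto_integral_prod_mul_fst_sub (F := fun p => F p.swap) hK hKmul hν
    (hF.comp measurable_swap) (fun p => hC _) hk
  exact h.congr fun i => congrArg₂ (· - ·) (integral_prod_swap fun p => F (p.1, p.2 * k))
    (integral_prod_swap F)

theorem IsFolnerNet.tendsto_integral_prod_mul_mul_sub {Λ₁ Λ₂ : ι → Set G}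
    (hΛ₁ : IsFolnerNet μ K l Λ₁) (hΛ₂ : IsFolnerNet μ K l Λ₂) (hK : MeasurableSet K)
    (hKmul : ∀ g ∈ K, ∀ h ∈ K, g * h ∈ K) (hF : Measurable fun p : K × K => F (p.1, p.2))
    (hC : ∀ p, ‖F p‖ ≤ C) (hk : k ∈ K) :
    Tendsto (fun i => ∫ p, F (p.1 * k, p.2 * k) ∂(μ[|Λ₁ i]).prod (μ[|Λ₂ i]) -
      ∫ p, F p ∂(μ[|Λ₁ i]).prod (μ[|Λ₂ i])) l (𝓝 0) := by
  have hFk : Measurable fun p : K × K => F (p.1, p.2 * k) :=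
    hF.comp (measurable_fst.prodMk (measurable_mul_const_subtype hKmul hk |>.comp measurable_snd))
  simpa only [sub_add_sub_cancel, add_zero] using
    (hΛ₁.tendsto_integral_prod_mul_fst_sub (F := fun p => F (p.1, p.2 * k)) hK hKmul hΛ₂.ae_mem
      hFk (fun p => hC _) hk).add
    (hΛ₂.tendsto_integral_prod_mul_snd_sub hK hKmul hΛ₁.ae_mem hF hC hk)

end ProductAverages

section TracialState

variable {A : Type*} [CStarAlgebra A] [PartialOrder A] [StarOrderedRing A] {f : A →ₚ[ℂ] ℂ}

theorem norm_toPreGNS_one (hf : f 1 = 1) : ‖f.toPreGNS 1‖ = 1 := by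
  simp [PositiveLinearMap.preGNS_norm_def, hf]

theorem norm_toPreGNS_le (hf : f 1 = 1) (a : A) : ‖f.toPreGNS a‖ ≤ ‖a‖ :=
  calc ‖f.toPreGNS a‖ = ‖f.leftMulMapPreGNS a (f.toPreGNS 1)‖ := by simp
    _ ≤ ‖f.leftMulMapPreGNS a‖ * ‖f.toPreGNS 1‖ := ContinuousLinearMap.le_opNorm _ _
    _ ≤ ‖a‖ := by
        rw [norm_toPreGNS_one hf, mul_one]
        exact LinearMap.mkContinuous_norm_le _ (norm_nonneg a) _

theorem norm_state_apply_le (hf : f 1 = 1) (a : A) : ‖f a‖ ≤ ‖a‖ :=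
  calc ‖f a‖ = ‖inner ℂ (f.toPreGNS 1) (f.toPreGNS a)‖ := by
        rw [PositiveLinearMap.preGNS_inner_def, PositiveLinearMap.ofPreGNS_toPreGNS,
          PositiveLinearMap.ofPreGNS_toPreGNS, star_one, one_mul]
    _ ≤ ‖f.toPreGNS 1‖ * ‖f.toPreGNS a‖ := norm_inner_le_norm _ _
    _ ≤ 1 * ‖a‖ := by
        gcongr
        exacts [(norm_toPreGNS_one hf).le, norm_toPreGNS_le hf a]
    _ = ‖a‖ := one_mul _

theorem norm_tracial_sandwich_le (hf : f 1 = 1) (htr : ∀ a b, f (a * b) = f (b * a))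
    (u x v : A) : ‖f (u * x * v)‖ ≤ ‖u‖ * ‖v‖ * ‖f.toPreGNS x‖ :=
  calc ‖f (u * x * v)‖ = ‖inner ℂ (f.toPreGNS (star (v * u))) (f.toPreGNS x)‖ := by
        rw [PositiveLinearMap.preGNS_inner_def, PositiveLinearMap.ofPreGNS_toPreGNS,
          PositiveLinearMap.ofPreGNS_toPreGNS, star_star, htr, mul_assoc]
    _ ≤ ‖f.toPreGNS (star (v * u))‖ * ‖f.toPreGNS x‖ := norm_inner_le_norm _ _
    _ ≤ ‖v * u‖ * ‖f.toPreGNS x‖ := by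
        gcongr
        exact (norm_toPreGNS_le hf _).trans_eq (norm_star _)
    _ ≤ ‖u‖ * ‖v‖ * ‖f.toPreGNS x‖ := by
        rw [mul_comm ‖u‖]
        gcongr
        exact norm_mul_le v u

theorem norm_toPreGNS_starAlgEquiv {σ : A ≃⋆ₐ[ℂ] A} (hσ : ∀ a, f (σ a) = f a) (a : A) :
    ‖f.toPreGNS (σ a)‖ = ‖f.toPreGNS a‖ := by
  simp [PositiveLinearMap.preGNS_norm_def, ← map_star, ← map_mul, hσ]

variable {Ω : Type*} [MeasurableSpace Ω] {P : Measure Ω} {u v : Ω → A} {σ : Ω → A ≃⋆ₐ[ℂ] A} {C : ℝ}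

/-- The averaged functional `x ↦ ∫ f (u p * σ p x * v p) ∂P`, regarded as living on the pre-GNS
space of `f`, where the trace property makes it bounded. -/
noncomputable def sandwichIntegral (f : A →ₚ[ℂ] ℂ) (P : Measure Ω) (u v : Ω → A)
    (σ : Ω → A ≃⋆ₐ[ℂ] A) (hint : ∀ x, Integrable (fun p => f (u p * σ p x * v p)) P) :
    f.PreGNS →ₗ[ℂ] ℂ where
  toFun x := ∫ p, f (u p * σ p (f.ofPreGNS x) * v p) ∂P
  map_add' x y := by
    simp only [map_add, mul_add, add_mul]
    exact integral_add (hint _) (hint _)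
  map_smul' c x := by
    simp only [map_smul, mul_smul_comm, smul_mul_assoc, integral_smul, RingHom.id_apply]

theorem sandwichIntegral_toPreGNS (hint : ∀ x, Integrable (fun p => f (u p * σ p x * v p)) P)
    (x : A) : sandwichIntegral f P u v σ hint (f.toPreGNS x) = ∫ p, f (u p * σ p x * v p) ∂P :=
  rfl

theorem norm_sandwichIntegral_le [IsZeroOrProbabilityMeasure P] (hf : f 1 = 1)
    (htr : ∀ a b, f (a * b) = f (b * a)) (hσ : ∀ p a, f (σ p a) = f a) (hC₀ : 0 ≤ C)
    (hC : ∀ p, ‖u p‖ * ‖v p‖ ≤ C) (hint : ∀ x, Integrable (fun p => f (u p * σ p x * v p)) P)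
    (x : f.PreGNS) : ‖sandwichIntegral f P u v σ hint x‖ ≤ C * ‖x‖ := by
  refine (norm_integral_le_of_norm_le_const (ae_of_all _ fun p => ?_)).trans
    (mul_le_of_le_one_right (by positivity) measureReal_le_one)
  calc ‖f (u p * σ p (f.ofPreGNS x) * v p)‖
      ≤ ‖u p‖ * ‖v p‖ * ‖f.toPreGNS (σ p (f.ofPreGNS x))‖ :=
        norm_tracial_sandwich_le hf htr _ _ _
    _ ≤ C * ‖x‖ := by
        rw [norm_toPreGNS_starAlgEquiv (hσ p), PositiveLinearMap.toPreGNS_ofPreGNS]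
        exact mul_le_mul_of_nonneg_right (hC p) (norm_nonneg _)

variable {G : Type*} {τ : G → A ≃⋆ₐ[ℂ] A} {K : Set G} {ι : Type*} {l : Filter ι}
  {s : Ω → G} {ν : ι → Measure Ω} [∀ i, IsZeroOrProbabilityMeasure (ν i)]

-- `Φ i x` depends only on the class of `x` in the GNS space, where the orbit of `a - f a • 1`
-- accumulates weakly at `0`; asymptotic invariance makes `Φ i` blind to moving along that orbit.
theorem tendsto_integral_tracial_sandwich_sub (hf : f 1 = 1)
    (htr : ∀ a b, f (a * b) = f (b * a)) (hinv : ∀ g a, f (τ g a) = f a)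
    (hrec : ∀ x y, f y = 0 → ∀ ε > 0, ∃ k ∈ K, (f (x * τ k y)).re < ε) (hC₀ : 0 ≤ C)
    (hC : ∀ p, ‖u p‖ * ‖v p‖ ≤ C)
    (hint : ∀ i x, Integrable (fun p => f (u p * τ (s p) x * v p)) (ν i))
    (hshift : ∀ k ∈ K, ∀ x, Tendsto (fun i => ∫ p, f (u p * τ (s p) (τ k x) * v p) ∂ν i -
      ∫ p, f (u p * τ (s p) x * v p) ∂ν i) l (𝓝 0)) (a : A) :
    Tendsto (fun i => ∫ p, f (u p * τ (s p) a * v p) ∂ν i - f a * ∫ p, f (u p * v p) ∂ν i)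
      l (𝓝 0) := by
  let _ : InnerProductSpace ℝ f.PreGNS := InnerProductSpace.complexToReal
  let Φ (i : ι) := sandwichIntegral f (ν i) u v (fun p => τ (s p)) (hint i)
  set b := a - f a • (1 : A)
  have hb : f b = 0 := by simp [b, hf]
  have hΦb : ∀ i, Φ i (f.toPreGNS b) =
      ∫ p, f (u p * τ (s p) a * v p) ∂ν i - f a * ∫ p, f (u p * v p) ∂ν i := fun i => by
    rw [map_sub, map_smul, map_sub, map_smul, sandwichIntegral_toPreGNS,
      sandwichIntegral_toPreGNS, smul_eq_mul]
    simp only [map_one, mul_one]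
  simp only [← hΦb]
  refine tendsto_zero_of_forall_tendsto_sub_zero (Φ := fun i => (Φ i).restrictScalars ℝ)
    (s := (fun k => f.toPreGNS (τ k b)) '' K)
    (isBounded_iff_forall_norm_le.2 ⟨‖f.toPreGNS b‖, ?_⟩) ?_ (C := C) ?_ ?_
  · rintro _ ⟨k, -, rfl⟩
    exact (norm_toPreGNS_starAlgEquiv (hinv k) b).le
  · intro x ε hε
    obtain ⟨k, hk, hlt⟩ := hrec (star (f.ofPreGNS x)) b hb ε hε
    exact ⟨_, Set.mem_image_of_mem _ hk, hlt⟩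
  · exact fun i => norm_sandwichIntegral_le hf htr (fun p => hinv (s p)) hC₀ hC (hint i)
  · rintro _ ⟨k, hk, rfl⟩
    exact hshift k hk b

end TracialState

theorem FolnerNetIn.ErgodicAlong.exists_re_lt {A : Type*} [CStarAlgebra A] [PartialOrder A]
    [StarOrderedRing A] {f : A →ₚ[ℂ] ℂ} {G : Type*} [CommGroup G] [MeasurableSpace G]
    {μ : Measure G} {K : Set G} {N : FolnerNetIn μ K} {τ : G → A ≃⋆ₐ[ℂ] A}
    (hN : N.ErgodicAlong f.toLinearMap τ) (hf : f 1 = 1) (hK : MeasurableSet K) {x y : A}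
    (hmeas : Measurable fun g : K => f (x * τ g y)) (hy : f y = 0) {ε : ℝ} (hε : 0 < ε) :
    ∃ k ∈ K, (f (x * τ k y)).re < ε := by
  refine N.isFolnerNet.exists_re_lt_of_tendsto hK hmeas (c := 0) (C := ‖x‖ * ‖y‖)
    (fun g => ?_) ?_ hε
  · exact (norm_state_apply_le hf _).trans
      (norm_mul_le_of_le le_rfl (NonUnitalStarAlgHom.norm_apply_le (τ g) y))
  · have h := hN x y
    rw [show f.toLinearMap y = 0 from hy, mul_zero] at h
    simp only [integral_cond]
    exact h

section FivePointCorrelation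

open NonUnitalStarAlgHom
open scoped ProbabilityTheory

variable {A : Type*} [CStarAlgebra A] [PartialOrder A] {f : A →ₚ[ℂ] ℂ} {G : Type*}

/-- The correlation function `(g, h) ↦ ω (τ_h(a₁) τ_g(a₂) τ_{gh}(a₃) τ_g(a₄) τ_h(a₅))`, whose
averages over products of Følner sets are to be computed. -/
noncomputable def fivePointCorrelation [Mul G] (f : A →ₚ[ℂ] ℂ) (τ : G → A ≃⋆ₐ[ℂ] A)
    (a₁ a₂ a₃ a₄ a₅ : A) (p : G × G) : ℂ :=
  f (τ p.2 a₁ * τ p.1 a₂ * τ (p.1 * p.2) a₃ * τ p.1 a₄ * τ p.2 a₅)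

theorem fivePointCorrelation_one [Mul G] {τ : G → A ≃⋆ₐ[ℂ] A}
    (htr : ∀ a b, f (a * b) = f (b * a)) (a₁ a₂ a₄ a₅ : A) :
    fivePointCorrelation f τ a₁ a₂ 1 a₄ a₅ =
      fivePointCorrelation f τ (a₅ * a₁) (a₂ * a₄) 1 1 1 := by
  funext p
  simp only [fivePointCorrelation, map_one, mul_one, map_mul]
  rw [htr, ← mul_assoc, ← mul_assoc, ← mul_assoc]

theorem fivePointCorrelation_mul_right_snd [Mul G] {τ : G → A ≃⋆ₐ[ℂ] A}
    (hτ_mul : ∀ g h a, τ g (τ h a) = τ (g * h) a) (b c : A) (p : G × G) (k : G) :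
    fivePointCorrelation f τ b c 1 1 1 (p.1, p.2 * k) =
      fivePointCorrelation f τ (τ k b) c 1 1 1 p := by
  simp only [fivePointCorrelation, map_one, mul_one, hτ_mul]

variable [CommGroup G] {τ : G → A ≃⋆ₐ[ℂ] A}

theorem fivePointCorrelation_mul_right (hτ_mul : ∀ g h a, τ g (τ h a) = τ (g * h) a)
    (hinv : ∀ g a, f (τ g a) = f a) (a₁ a₂ a₃ a₄ a₅ : A) (p : G × G) (k : G) :
    fivePointCorrelation f τ a₁ a₂ a₃ a₄ a₅ (p.1 * k, p.2 * k) =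
      fivePointCorrelation f τ a₁ a₂ (τ k a₃) a₄ a₅ p := by
  unfold fivePointCorrelation
  rw [← hinv k (τ p.2 a₁ * _ * _ * _ * _)]
  simp only [map_mul, hτ_mul]
  simp only [mul_comm, mul_left_comm]

variable [StarOrderedRing A]

theorem norm_fivePointCorrelation_le (hf : f 1 = 1) (a₁ a₂ a₃ a₄ a₅ : A) (p : G × G) :
    ‖fivePointCorrelation f τ a₁ a₂ a₃ a₄ a₅ p‖ ≤ ‖a₁‖ * ‖a₂‖ * ‖a₃‖ * ‖a₄‖ * ‖a₅‖ :=
  (norm_state_apply_le hf _).trans (norm_mul_le_of_le (norm_mul_le_of_le (norm_mul_le_of_le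
    (norm_mul_le_of_le (norm_apply_le _ _) (norm_apply_le _ _)) (norm_apply_le _ _))
      (norm_apply_le _ _)) (norm_apply_le _ _))

variable [MeasurableSpace G] [MeasurableMul G] {μ : Measure G} [μ.IsMulRightInvariant]
  {K : Set G} {ι : Type*} {l : Filter ι} {Λ₁ Λ₂ : ι → Set G}

theorem tendsto_integral_fivePointCorrelation_sub (hf : f 1 = 1)
    (htr : ∀ a b, f (a * b) = f (b * a)) (hτ_mul : ∀ g h a, τ g (τ h a) = τ (g * h) a)
    (hinv : ∀ g a, f (τ g a) = f a)
    (hrec : ∀ x y, f y = 0 → ∀ ε > 0, ∃ k ∈ K, (f (x * τ k y)).re < ε)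
    (hK : MeasurableSet K) (hKmul : ∀ g ∈ K, ∀ h ∈ K, g * h ∈ K)
    (hΛ₁ : IsFolnerNet μ K l Λ₁) (hΛ₂ : IsFolnerNet μ K l Λ₂) (a₁ a₂ a₃ a₄ a₅ : A)
    (hmeas : ∀ x, Measurable fun p : K × K => fivePointCorrelation f τ a₁ a₂ x a₄ a₅ (p.1, p.2)) :
    Tendsto (fun i =>
      ∫ p, fivePointCorrelation f τ a₁ a₂ a₃ a₄ a₅ p ∂(μ[|Λ₂ i]).prod (μ[|Λ₁ i]) -
        f a₃ * ∫ p, fivePointCorrelation f τ a₁ a₂ 1 a₄ a₅ p ∂(μ[|Λ₂ i]).prod (μ[|Λ₁ i]))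
      l (𝓝 0) := by
  have hsandwich : ∀ x p, f (τ p.2 a₁ * τ p.1 a₂ * τ (p.1 * p.2) x * (τ p.1 a₄ * τ p.2 a₅)) =
      fivePointCorrelation f τ a₁ a₂ x a₄ a₅ p := fun x p => by
    rw [fivePointCorrelation, ← mul_assoc]
  have h := tendsto_integral_tracial_sandwich_sub (u := fun p : G × G => τ p.2 a₁ * τ p.1 a₂)
    (v := fun p => τ p.1 a₄ * τ p.2 a₅) (s := fun p => p.1 * p.2) (l := l)
    (ν := fun i => (μ[|Λ₂ i]).prod (μ[|Λ₁ i])) (C := ‖a₁‖ * ‖a₂‖ * (‖a₄‖ * ‖a₅‖))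
    hf htr hinv hrec (by positivity)
    (fun p => mul_le_mul (norm_mul_le_of_le (norm_apply_le _ _) (norm_apply_le _ _))
      (norm_mul_le_of_le (norm_apply_le _ _) (norm_apply_le _ _)) (by positivity) (by positivity))
    (fun i x => by
      simpa only [hsandwich] using hΛ₂.integrable_prod hK hΛ₁.ae_mem (hmeas x)
        (norm_fivePointCorrelation_le hf a₁ a₂ x a₄ a₅) i)
    (fun k hk x => by
      simpa only [hsandwich, fivePointCorrelation_mul_right hτ_mul hinv] using
        hΛ₂.tendsto_integral_prod_mul_mul_sub hΛ₁ hK hKmul (hmeas x)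
          (norm_fivePointCorrelation_le hf a₁ a₂ x a₄ a₅) hk) a₃
  simpa only [hsandwich, fivePointCorrelation, map_one, mul_one, mul_assoc] using h

theorem tendsto_integral_twoPointCorrelation_sub (hf : f 1 = 1)
    (htr : ∀ a b, f (a * b) = f (b * a)) (hτ_mul : ∀ g h a, τ g (τ h a) = τ (g * h) a)
    (hinv : ∀ g a, f (τ g a) = f a)
    (hrec : ∀ x y, f y = 0 → ∀ ε > 0, ∃ k ∈ K, (f (x * τ k y)).re < ε)
    (hK : MeasurableSet K) (hKmul : ∀ g ∈ K, ∀ h ∈ K, g * h ∈ K)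
    (hΛ₁ : IsFolnerNet μ K l Λ₁) (hΛ₂ : IsFolnerNet μ K l Λ₂) (b c : A)
    (hmeas : ∀ x, Measurable fun p : K × K => fivePointCorrelation f τ x c 1 1 1 (p.1, p.2)) :
    Tendsto (fun i =>
      ∫ p, fivePointCorrelation f τ b c 1 1 1 p ∂(μ[|Λ₂ i]).prod (μ[|Λ₁ i]) -
        f b * ∫ p, fivePointCorrelation f τ 1 c 1 1 1 p ∂(μ[|Λ₂ i]).prod (μ[|Λ₁ i]))
      l (𝓝 0) := by
  have hsandwich : ∀ x p, f (1 * τ p.2 x * τ p.1 c) = fivePointCorrelation f τ x c 1 1 1 p :=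
    fun x p => by simp only [fivePointCorrelation, map_one, mul_one, one_mul]
  have h := tendsto_integral_tracial_sandwich_sub (u := fun _ : G × G => (1 : A))
    (v := fun p => τ p.1 c) (s := Prod.snd) (l := l)
    (ν := fun i => (μ[|Λ₂ i]).prod (μ[|Λ₁ i])) (C := ‖(1 : A)‖ * ‖c‖)
    hf htr hinv hrec (by positivity)
    (fun p => mul_le_mul_of_nonneg_left (norm_apply_le _ _) (norm_nonneg _))
    (fun i x => by
      simpa only [hsandwich] using hΛ₂.integrable_prod hK hΛ₁.ae_mem (hmeas x)
        (norm_fivePointCorrelation_le hf x c 1 1 1) i)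
    (fun k hk x => by
      simpa only [hsandwich, fivePointCorrelation_mul_right_snd hτ_mul] using
        hΛ₁.tendsto_integral_prod_mul_snd_sub hK hKmul hΛ₂.ae_mem (hmeas x)
          (norm_fivePointCorrelation_le hf x c 1 1 1) hk) b
  simpa only [hsandwich, fivePointCorrelation, map_one, mul_one, one_mul] using h

theorem tendsto_integral_fivePointCorrelation (hf : f 1 = 1)
    (htr : ∀ a b, f (a * b) = f (b * a)) (hτ_mul : ∀ g h a, τ g (τ h a) = τ (g * h) a)
    (hinv : ∀ g a, f (τ g a) = f a)
    (hrec : ∀ x y, f y = 0 → ∀ ε > 0, ∃ k ∈ K, (f (x * τ k y)).re < ε)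
    (hK : MeasurableSet K) (hKmul : ∀ g ∈ K, ∀ h ∈ K, g * h ∈ K)
    (hmeas : ∀ a₁ a₂ a₃ a₄ a₅, Measurable fun p : K × K =>
      fivePointCorrelation f τ a₁ a₂ a₃ a₄ a₅ (p.1, p.2))
    (hΛ₁ : IsFolnerNet μ K l Λ₁) (hΛ₂ : IsFolnerNet μ K l Λ₂) (a₁ a₂ a₃ a₄ a₅ : A) :
    Tendsto (fun i => ∫ p, fivePointCorrelation f τ a₁ a₂ a₃ a₄ a₅ p ∂(μ[|Λ₂ i]).prod (μ[|Λ₁ i]))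
      l (𝓝 (f (a₅ * a₁) * f a₃ * f (a₂ * a₄))) := by
  have h₃ := tendsto_integral_fivePointCorrelation_sub hf htr hτ_mul hinv hrec hK hKmul hΛ₁ hΛ₂
    a₁ a₂ a₃ a₄ a₅ fun x => hmeas a₁ a₂ x a₄ a₅
  have h₁₅ := tendsto_integral_twoPointCorrelation_sub hf htr hτ_mul hinv hrec hK hKmul hΛ₁ hΛ₂
    (a₅ * a₁) (a₂ * a₄) fun x => hmeas x _ 1 1 1
  have h₂₄ : ∀ᶠ i in l,
      ∫ p, fivePointCorrelation f τ 1 (a₂ * a₄) 1 1 1 p ∂(μ[|Λ₂ i]).prod (μ[|Λ₁ i]) =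
        f (a₂ * a₄) := by
    filter_upwards [hΛ₁.eventually_pos_lt_top, hΛ₂.eventually_pos_lt_top] with i hi₁ hi₂
    have := ProbabilityTheory.cond_isProbabilityMeasure_of_finite hi₁.1.ne' hi₁.2.ne
    have := ProbabilityTheory.cond_isProbabilityMeasure_of_finite hi₂.1.ne' hi₂.2.ne
    simp only [fivePointCorrelation, map_one, mul_one, one_mul, hinv, integral_const, probReal_univ,
      one_smul]
  rw [fivePointCorrelation_one htr] at h₃
  have h := (h₃.add (h₁₅.const_mul (f a₃))).add_const (f (a₅ * a₁) * f a₃ * f (a₂ * a₄))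
  rw [mul_zero, add_zero, zero_add] at h
  refine h.congr' (h₂₄.mono fun i hi => ?_)
  rw [hi]
  ring

end FivePointCorrelation

theorem prop_4_3_2_general
    {A : Type*} [NormedRing A] [StarRing A] [CStarRing A] [NormedAlgebra ℂ A]
    [CompleteSpace A] [StarModule ℂ A]
    (ω : A →ₗ[ℂ] ℂ) (hω_pos : ∀ a : A, 0 ≤ ω (star a * a)) (hω_one : ω 1 = 1)
    (hω_tracial : ∀ a b : A, ω (a * b) = ω (b * a))
    {G : Type*} [CommGroup G] [MeasurableSpace G] (μ : Measure G)
    (hTrans : ∀ (V : Set G) (g : G), MeasurableSet V → MeasurableSet (V * {g}))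
    (hRight : ∀ (V : Set G) (g : G), MeasurableSet V → μ (V * {g}) = μ V)
    (K : Set G) (hKmeas : MeasurableSet K) (hKmul : ∀ g ∈ K, ∀ h ∈ K, g * h ∈ K)
    (τ : G → A ≃⋆ₐ[ℂ] A) (hτ_mul : ∀ g h a, τ g (τ h a) = τ (g * h) a)
    (hω_inv : ∀ g a, ω (τ g a) = ω a)
    (hτ_meas : ∀ a b : A, Measurable fun g : K => ω (a * τ (g : G) b))
    (hErg : ∃ F : FolnerNetIn μ K, F.ErgodicAlong ω τ)
    (hmeas5 : ∀ a₁ a₂ a₃ a₄ a₅ : A, Measurable fun p : K × K =>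
      ω (τ (p.2 : G) a₁ * τ (p.1 : G) a₂ * τ ((p.1 : G) * (p.2 : G)) a₃ *
          τ (p.1 : G) a₄ * τ (p.2 : G) a₅))
    {ι : Type*} {l : Filter ι} {Λ1 Λ2 : ι → Set G}
    (hΛ1 : IsFolnerNet μ K l Λ1) (hΛ2 : IsFolnerNet μ K l Λ2) (a₁ a₂ a₃ a₄ a₅ : A) :
    Tendsto (fun α => ((μ (Λ1 α)).toReal * (μ (Λ2 α)).toReal)⁻¹ •
        ∫ h in Λ1 α, ∫ g in Λ2 α,
          ω (τ h a₁ * τ g a₂ * τ (g * h) a₃ * τ g a₄ * τ h a₅) ∂μ ∂μ)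
      l (𝓝 (ω (a₅ * a₁) * ω a₃ * ω (a₂ * a₄))) := by
  let _ : CStarAlgebra A := { }
  let _ : PartialOrder A := CStarAlgebra.spectralOrder A
  have : StarOrderedRing A := CStarAlgebra.spectralOrderedRing A
  have := measurableMul_of_measurableSet_mul_singleton hTrans
  have := isMulRightInvariant_of_measure_mul_singleton hRight
  let f : A →ₚ[ℂ] ℂ := .mk₀ ω fun x hx => by
    obtain ⟨y, rfl⟩ := CStarAlgebra.nonneg_iff_eq_star_mul_self.1 hx
    exact hω_pos y
  obtain ⟨N, hN⟩ := hErg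
  refine (tendsto_integral_fivePointCorrelation (f := f) hω_one hω_tracial hτ_mul hω_inv
    (fun x y hy ε hε => FolnerNetIn.ErgodicAlong.exists_re_lt (f := f) hN hω_one hKmeas
      (hτ_meas x y) hy hε) hKmeas hKmul hmeas5 hΛ1 hΛ2 a₁ a₂ a₃ a₄ a₅).congr fun i => ?_
  exact integral_cond_prod_cond (hΛ2.integrable_prod hKmeas hΛ1.ae_mem (hmeas5 a₁ a₂ a₃ a₄ a₅)
    (norm_fivePointCorrelation_le (f := f) hω_one a₁ a₂ a₃ a₄ a₅) i)

/-- **Proposition 4.3(2).** If moreover `(A, ω, τ, K)` is asymptotically abelian with respect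
to `(Λ1 α)` and `ω` is tracial, then
`lim_α M_{α,e,e}(ω (τ_h(a₁) τ_g(a₂) τ_{gh}(a₃) τ_g(a₄) τ_h(a₅))) = ω(a₅a₁) ω(a₃) ω(a₂a₄)`. -/
theorem prop_4_3_2
    -- a unital C*-algebra A
    {A : Type*} [NormedRing A] [StarRing A] [CStarRing A] [NormedAlgebra ℂ A]
    [CompleteSpace A] [StarModule ℂ A]
    -- a tracial state ω on A
    (ω : A →ₗ[ℂ] ℂ) (hω_pos : ∀ a : A, 0 ≤ ω (star a * a)) (hω_one : ω 1 = 1)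
    (hω_tracial : ∀ a b : A, ω (a * b) = ω (b * a))
    -- a right invariant measure group (G, Σ, μ) with G abelian
    {G : Type*} [CommGroup G] [MeasurableSpace G] (μ : Measure G)
    (hTrans : ∀ (V : Set G) (g : G), MeasurableSet V → MeasurableSet (V * {g}))
    (hRight : ∀ (V : Set G) (g : G), MeasurableSet V → μ (V * {g}) = μ V)
    (hInvMeas : Measurable (fun g : G => g⁻¹))
    (hInvInv : ∀ V : Set G, MeasurableSet V → μ V⁻¹ = μ V)
    -- K is a Følner semigroup in G
    (K : Set G) (hKmeas : MeasurableSet K) (hKmul : ∀ g ∈ K, ∀ h ∈ K, g * h ∈ K)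
    -- the action τ, making (A, ω, τ, K) a C*-dynamical system
    (τ : G → A ≃⋆ₐ[ℂ] A)
    (hτ_one : ∀ a : A, τ 1 a = a)
    (hτ_mul : ∀ g h a, τ g (τ h a) = τ (g * h) a)
    (hω_inv : ∀ g a, ω (τ g a) = ω a)
    (hτ_meas : ∀ a b : A, Measurable fun g : K => ω (a * τ (g : G) b))
    -- g ↦ ‖[a, τ_g(b)]‖ is Σ|_K-measurable
    (hcomm_meas : ∀ a b : A, Measurable fun g : K => ‖a * τ (g : G) b - τ (g : G) b * a‖)
    -- the system is ergodic (w.r.t. some, equivalently every, Følner net in K)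
    (hErg : ∃ F : FolnerNetIn μ K, F.ErgodicAlong ω τ)
    -- the measurability hypothesis: (g,h) ↦ ω(τ_h(a₁) τ_g(a₂) τ_{gh}(a₃) τ_g(a₄) τ_h(a₅))
    (hmeas5 : ∀ a₁ a₂ a₃ a₄ a₅ : A, Measurable fun p : K × K =>
      ω (τ (p.2 : G) a₁ * τ (p.1 : G) a₂ * τ ((p.1 : G) * (p.2 : G)) a₃ *
          τ (p.1 : G) a₄ * τ (p.2 : G) a₅))
    -- Følner nets (Λ1 α), (Λ2 α) in K indexed by the same directed set
    {ι : Type*} [Preorder ι] [Nonempty ι] [IsDirected ι (· ≤ ·)]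
    (Λ1 Λ2 : ι → Set G)
    (hΛ1 : ∀ α, MeasurableSet (Λ1 α) ∧ Λ1 α ⊆ K)
    (hΛ1fin : ∀ᶠ α in atTop, 0 < μ (Λ1 α) ∧ μ (Λ1 α) < ⊤)
    (hΛ1folner : ∀ g ∈ K, Tendsto
      (fun α => (μ (symmDiff (Λ1 α) (Λ1 α * {g}))).toReal / (μ (Λ1 α)).toReal) atTop (𝓝 0))
    (hΛ2 : ∀ α, MeasurableSet (Λ2 α) ∧ Λ2 α ⊆ K)
    (hΛ2fin : ∀ᶠ α in atTop, 0 < μ (Λ2 α) ∧ μ (Λ2 α) < ⊤)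
    (hΛ2folner : ∀ g ∈ K, Tendsto
      (fun α => (μ (symmDiff (Λ2 α) (Λ2 α * {g}))).toReal / (μ (Λ2 α)).toReal) atTop (𝓝 0))
    -- the system is asymptotically abelian with respect to (Λ1 α)
    (hAA : ∀ a b : A, Tendsto
      (fun α => (μ (Λ1 α)).toReal⁻¹ * ∫ g in Λ1 α, ‖a * τ g b - τ g b * a‖ ∂μ)
      atTop (𝓝 0)) :
    -- conclusion
    ∀ a₁ a₂ a₃ a₄ a₅ : A,
      Tendsto (fun α => ((μ (Λ1 α)).toReal * (μ (Λ2 α)).toReal)⁻¹ •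
          ∫ h in Λ1 α, ∫ g in Λ2 α,
            ω (τ h a₁ * τ g a₂ * τ (g * h) a₃ * τ g a₄ * τ h a₅) ∂μ ∂μ)
        atTop (𝓝 (ω (a₅ * a₁) * ω a₃ * ω (a₂ * a₄))) :=
  prop_4_3_2_general ω hω_pos hω_one hω_tracial μ hTrans hRight K hKmeas hKmul τ hτ_mul hω_inv
    hτ_meas hErg hmeas5 ⟨fun α => (hΛ1 α).1, fun α => (hΛ1 α).2, hΛ1fin, hΛ1folner⟩
    ⟨fun α => (hΛ2 α).1, fun α => (hΛ2 α).2, hΛ2fin, hΛ2folner⟩
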